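/- There is no function w ∈ L¹_loc(ℝ) such that w is odd, lim_{h→0⁺}(1/h)∫₀^h w = 1, and the distributional derivative ∂_x w satisfies ∂_x w ≤ C in D'(ℝ) for some constant C > 0. Equivalently: if v ∈ L^∞(ℝ) is odd with Lebesgue-point right trace lim_{h→0⁺}(1/h)∫₀^h v = 1 at 0, then for every c > 0 the distributional inequality ∂_x v ≤ 1/c in D'(ℝ) fails. -/

import Mathlib

open MeasureTheory Set Filter Topology

/-- cutoff on `(0,h)` -/
noncomputable def kcut (h : ℝ) (n : ℕ) (x : ℝ) : ℝ :=
  Real.smoothTransition (n * x) * Real.smoothTransition (n * (h - x))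

lemma kcut_contDiff (h : ℝ) (n : ℕ) : ContDiff ℝ (⊤ : ℕ∞) (kcut h n) := by
  unfold kcut
  exact (Real.smoothTransition.contDiff.comp (by fun_prop)).mul
    (Real.smoothTransition.contDiff.comp (by fun_prop))

lemma kcut_nonneg (h : ℝ) (n : ℕ) (x : ℝ) : 0 ≤ kcut h n x :=
  mul_nonneg (Real.smoothTransition.nonneg _) (Real.smoothTransition.nonneg _)

lemma kcut_le_one (h : ℝ) (n : ℕ) (x : ℝ) : kcut h n x ≤ 1 :=
  mul_le_one₀ (Real.smoothTransition.le_one _) (Real.smoothTransition.nonneg _)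
    (Real.smoothTransition.le_one _)

lemma kcut_left (h : ℝ) (n : ℕ) {x : ℝ} (hx : x ≤ 0) : kcut h n x = 0 := by
  unfold kcut
  rw [Real.smoothTransition.zero_of_nonpos
    (mul_nonpos_of_nonneg_of_nonpos (Nat.cast_nonneg n) hx), zero_mul]

lemma kcut_right (h : ℝ) (n : ℕ) {x : ℝ} (hx : h ≤ x) : kcut h n x = 0 := by
  unfold kcut
  rw [Real.smoothTransition.zero_of_nonpos (x := n * (h - x))
    (mul_nonpos_of_nonneg_of_nonpos (Nat.cast_nonneg n) (by linarith)), mul_zero]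

lemma smooth_tendsto {y : ℝ} (hy : 0 < y) :
    Tendsto (fun n : ℕ => Real.smoothTransition (n * y)) atTop (𝓝 1) := by
  apply tendsto_const_nhds.congr'
  have h1 : Tendsto (fun n : ℕ => (n : ℝ) * y) atTop atTop :=
    tendsto_natCast_atTop_atTop.atTop_mul_const hy
  filter_upwards [h1.eventually_ge_atTop 1] with n hn
  exact (Real.smoothTransition.one_of_one_le hn).symm

lemma kcut_tendsto (h x : ℝ) :
    Tendsto (fun n : ℕ => kcut h n x) atTop (𝓝 ((Ioo 0 h).indicator (fun _ => 1) x)) := by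
  by_cases hx : x ∈ Ioo 0 h
  · rw [indicator_of_mem hx]
    have := (smooth_tendsto hx.1).mul (smooth_tendsto (sub_pos.2 hx.2))
    simpa [kcut] using this
  · rw [indicator_of_notMem hx]
    have : ∀ n, kcut h n x = 0 := by
      intro n
      by_cases h0 : x ≤ 0
      · exact kcut_left h n h0
      · apply kcut_right h n
        by_contra h2
        exact hx ⟨not_le.1 h0, not_le.1 h2⟩
    simp [this]

/-- derivative of the test function -/
noncomputable def gcut (h : ℝ) (n : ℕ) (x : ℝ) : ℝ := kcut h n (-x) - kcut h n x

/-- the test function -/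
noncomputable def phicut (h : ℝ) (n : ℕ) (x : ℝ) : ℝ := ∫ t in (-h)..x, gcut h n t

lemma gcut_contDiff (h : ℝ) (n : ℕ) : ContDiff ℝ (⊤ : ℕ∞) (gcut h n) := by
  unfold gcut
  exact ((kcut_contDiff h n).comp contDiff_neg).sub (kcut_contDiff h n)

lemma gcut_odd (h : ℝ) (n : ℕ) (x : ℝ) : gcut h n (-x) = - gcut h n x := by
  simp [gcut]

lemma phicut_hasDeriv (h : ℝ) (n : ℕ) (x : ℝ) : HasDerivAt (phicut h n) (gcut h n x) x :=
  intervalIntegral.integral_hasDerivAt_right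
    ((gcut_contDiff h n).continuous.intervalIntegrable _ _)
    ((gcut_contDiff h n).continuous.stronglyMeasurableAtFilter _ _)
    (gcut_contDiff h n).continuous.continuousAt

lemma phicut_deriv (h : ℝ) (n : ℕ) : deriv (phicut h n) = gcut h n :=
  funext fun x => (phicut_hasDeriv h n x).deriv

lemma phicut_contDiff (h : ℝ) (n : ℕ) : ContDiff ℝ (⊤ : ℕ∞) (phicut h n) := by
  rw [contDiff_infty_iff_deriv, phicut_deriv]
  exact ⟨fun x => (phicut_hasDeriv h n x).differentiableAt, gcut_contDiff h n⟩

lemma phicut_even (h : ℝ) (n : ℕ) (x : ℝ) : phicut h n (-x) = phicut h n x := by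
  have hi : ∀ a b, IntervalIntegrable (gcut h n) volume a b :=
    fun a b => (gcut_contDiff h n).continuous.intervalIntegrable _ _
  have h1 : ∫ t in (-x)..x, gcut h n t = 0 := by
    have h2 := intervalIntegral.integral_comp_neg (a := -x) (b := x) (gcut h n)
    simp only [gcut_odd, intervalIntegral.integral_neg, neg_neg] at h2
    linarith
  have := intervalIntegral.integral_add_adjacent_intervals (hi (-h) (-x)) (hi (-x) x)
  unfold phicut
  linarith

lemma phicut_abs (h : ℝ) (n : ℕ) (x : ℝ) : phicut h n x = phicut h n (-|x|) := by
  rcases abs_choice x with hx | hx <;> rw [hx]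
  · rw [phicut_even]
  · rw [neg_neg]

lemma phicut_left (h : ℝ) (hh : 0 < h) (n : ℕ) {x : ℝ} (hx : x ≤ -h) : phicut h n x = 0 := by
  unfold phicut
  rw [intervalIntegral.integral_congr (g := fun _ => 0)]
  · simp
  · intro t ht
    rw [uIcc_of_ge hx] at ht
    have := ht.2
    simp only [gcut]
    rw [kcut_right h n (by linarith), kcut_left h n (by linarith), sub_zero]

lemma phicut_outside (h : ℝ) (hh : 0 < h) (n : ℕ) {x : ℝ} (hx : x ∉ Icc (-h) h) :
    phicut h n x = 0 := by
  rw [phicut_abs]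
  apply phicut_left h hh
  by_contra h2
  exact hx (abs_le.1 (by linarith))

lemma phicut_nonneg (h : ℝ) (hh : 0 < h) (n : ℕ) (x : ℝ) : 0 ≤ phicut h n x := by
  by_cases hx : x ∈ Icc (-h) h
  · rw [phicut_abs]
    apply intervalIntegral.integral_nonneg
    · have := abs_le.2 hx
      linarith
    · intro t ht
      have := ht.2
      have := abs_nonneg x
      simp only [gcut]
      rw [kcut_left h n (x := t) (by linarith), sub_zero]
      exact kcut_nonneg _ _ _
  · rw [phicut_outside h hh n hx]

lemma phicut_le (h : ℝ) (n : ℕ) {x : ℝ} (hx : x ∈ Icc (-h) h) : phicut h n x ≤ h := by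
  rw [phicut_abs]
  have h1 : ‖∫ t in (-h)..(-|x|), gcut h n t‖ ≤ 1 * |-|x| - (-h)| := by
    apply intervalIntegral.norm_integral_le_of_norm_le_const
    intro t _
    rw [Real.norm_eq_abs, abs_le]
    have a1 := kcut_nonneg h n t
    have a2 := kcut_nonneg h n (-t)
    have a3 := kcut_le_one h n t
    have a4 := kcut_le_one h n (-t)
    simp only [gcut]
    constructor <;> linarith
  have h2 := abs_le.2 hx
  have h3 := abs_nonneg x
  rw [abs_of_nonneg (by linarith : 0 ≤ -|x| - (-h))] at h1
  have h4 := le_abs_self (∫ t in (-h)..(-|x|), gcut h n t)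
  rw [Real.norm_eq_abs] at h1
  unfold phicut
  linarith

lemma phicut_compact (h : ℝ) (hh : 0 < h) (n : ℕ) : HasCompactSupport (phicut h n) :=
  HasCompactSupport.intro isCompact_Icc (fun _ hx => phicut_outside h hh n hx)

lemma phicut_integral (h : ℝ) (hh : 0 < h) (n : ℕ) : ∫ x, phicut h n x ≤ 2 * h * h := by
  rw [← setIntegral_eq_integral_of_forall_compl_eq_zero
    (s := Icc (-h) h) (fun x hx => phicut_outside h hh n hx)]
  calc ∫ x in Icc (-h) h, phicut h n x ≤ ∫ x in Icc (-h) h, h := by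
        apply setIntegral_mono_on
        · exact (phicut_contDiff h n).continuous.integrableOn_Icc
        · exact continuous_const.integrableOn_Icc
        · exact measurableSet_Icc
        · intro x hx
          exact phicut_le h n hx
    _ = 2 * h * h := by
        rw [setIntegral_const, smul_eq_mul, Real.volume_real_Icc_of_le (by linarith)]
        ring

lemma kcut_bound (h : ℝ) (n : ℕ) (v : ℝ → ℝ) (M x : ℝ) (hx : |v x| ≤ M) :
    ‖v x * kcut h n x‖ ≤ (Icc 0 h).indicator (fun _ => M) x := by
  by_cases hm : x ∈ Icc 0 h
  · rw [indicator_of_mem hm, Real.norm_eq_abs, abs_mul, abs_of_nonneg (kcut_nonneg h n x)]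
    have := mul_le_mul_of_nonneg_left (kcut_le_one h n x) (abs_nonneg (v x))
    linarith
  · rw [indicator_of_notMem hm]
    have : kcut h n x = 0 := by
      by_cases h0 : x ≤ 0
      · exact kcut_left h n h0
      · apply kcut_right h n
        by_contra h2
        exact hm ⟨(not_le.1 h0).le, (not_le.1 h2).le⟩
    simp [this]

lemma ind_integrable (h M : ℝ) : Integrable ((Icc 0 h).indicator (fun _ => M)) :=
  (continuous_const.integrableOn_Icc).integrable_indicator measurableSet_Icc

/-- the jump at the origin violates every one-sided Oleĭnik bound.
If `v ∈ L^∞(ℝ)` is odd with Lebesgue-point right trace `lim_{h→0⁺} (1/h)∫₀^h v = 1` at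
the origin, then for every `c > 0` the distributional inequality `∂_x v ≤ 1/c` in
`D'(ℝ)` fails; i.e. it is not true that `-∫ v ∂_x φ ≤ (1/c) ∫ φ` for every nonnegative
`φ ∈ C_c^∞(ℝ)`. -/
theorem jump_violates_oleinik
    (v : ℝ → ℝ) (hmeas : Measurable v)
    (hbdd : ∃ M : ℝ, ∀ᵐ x : ℝ, |v x| ≤ M)
    (hodd : ∀ x : ℝ, v (-x) = -v x)
    (htrace : Tendsto (fun h : ℝ => (1 / h) * ∫ x in Set.Ioc 0 h, v x)
      (nhdsWithin 0 (Set.Ioi 0)) (nhds 1)) :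
    ∀ c > (0 : ℝ),
      ¬ (∀ φ : ℝ → ℝ, ContDiff ℝ (⊤ : ℕ∞) φ → HasCompactSupport φ → (∀ x, 0 ≤ φ x) →
          -(∫ x : ℝ, v x * deriv φ x) ≤ (1 / c) * ∫ x : ℝ, φ x) := by
  intro c hc H
  obtain ⟨M, hM⟩ := hbdd
  have key : ∀ h : ℝ, 0 < h → ∫ x in Ioc 0 h, v x ≤ h * h / c := by
    intro h hh
    have hsm : ∀ n, AEStronglyMeasurable (fun x => v x * kcut h n x) volume := fun n =>
      (hmeas.mul (kcut_contDiff h n).continuous.measurable).aestronglyMeasurable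
    have hb : ∀ n, ∀ᵐ x, ‖v x * kcut h n x‖ ≤ (Icc 0 h).indicator (fun _ => M) x := fun n => by
      filter_upwards [hM] with x hx using kcut_bound h n v M x hx
    have hint : ∀ n, Integrable (fun x => v x * kcut h n x) := fun n =>
      (ind_integrable h M).mono' (hsm n) (hb n)
    have hlim : Tendsto (fun n => ∫ x, v x * kcut h n x) atTop
        (𝓝 (∫ x, v x * (Ioo 0 h).indicator (fun _ => 1) x)) := by
      apply tendsto_integral_of_dominated_convergence _ hsm (ind_integrable h M) hb
      exact Eventually.of_forall fun x => (kcut_tendsto h x).const_mul _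
    have heq : ∫ x, v x * (Ioo 0 h).indicator (fun _ => 1) x = ∫ x in Ioc 0 h, v x := by
      rw [integral_Ioc_eq_integral_Ioo, ← integral_indicator measurableSet_Ioo]
      congr 1
      ext x
      by_cases hx : x ∈ Ioo 0 h <;> simp [indicator, hx]
    rw [← heq]
    apply le_of_tendsto' hlim
    intro n
    have h1 := H (phicut h n) (phicut_contDiff h n) (phicut_compact h hh n)
      (phicut_nonneg h hh n)
    rw [phicut_deriv] at h1
    have h2 : ∫ x, v x * gcut h n x = -2 * ∫ x, v x * kcut h n x := by
      have e : (fun x => v x * gcut h n x)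
          = fun x => -(v (-x) * kcut h n (-x)) - v x * kcut h n x := by
        ext x
        rw [hodd, gcut]
        ring
      have hi : Integrable (fun x => -(v (-x) * kcut h n (-x))) := (hint n).comp_neg.neg
      rw [e, integral_sub hi (hint n), integral_neg,
        integral_neg_eq_self (fun x => v x * kcut h n x)]
      ring
    rw [h2] at h1
    have h3 := mul_le_mul_of_nonneg_left (phicut_integral h hh n) (one_div_pos.2 hc).le
    have h4 : (1 / c) * (2 * h * h) = 2 * (h * h / c) := by ring
    linarith
  have hz : Tendsto (fun h : ℝ => h / c) (nhdsWithin 0 (Ioi 0)) (nhds 0) := by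
    have : Tendsto (fun h : ℝ => h / c) (nhds 0) (nhds (0 / c)) := tendsto_id.div_const c
    rw [zero_div] at this
    exact this.mono_left nhdsWithin_le_nhds
  have : (1 : ℝ) ≤ 0 := by
    apply le_of_tendsto_of_tendsto htrace hz
    filter_upwards [self_mem_nhdsWithin] with h hh
    have hh' : 0 < h := hh
    have h3 := mul_le_mul_of_nonneg_left (key h hh') (one_div_pos.2 hh').le
    have h4 : (1 / h) * (h * h / c) = h / c := by field_simp
    linarith
  linarith
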